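/- arXiv:math/0502483 — 3 statements merged into one kernel-verified Lean document; each statement's English description precedes it below -/
import Mathlib

section
/- For every pair of points p, q ∈ SO(3) there exists a time optimal trajectory of (Σ) joining p to q: there is an admissible pair (γ,u) on some interval [a,b] with γ(a) = p, γ(b) = q, such that every admissible pair (γ',u') on [a',b'] with γ'(a') = p and γ'(b') = q satisfies b − a ≤ b' − a'. -/
open Real MeasureTheory intervalIntegral Matrix

/-- The drift matrix `f = cos α · ![![0,1,0],![-1,0,0],![0,0,0]]`. -/
noncomputable def fM (α : ℝ) : Matrix (Fin 3) (Fin 3) ℝ :=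
  Real.cos α • !![0,1,0; -1,0,0; 0,0,0]

/-- The controlled matrix `g = sin α · ![![0,0,0],![0,0,1],![0,-1,0]]`. -/
noncomputable def gM (α : ℝ) : Matrix (Fin 3) (Fin 3) ℝ :=
  Real.sin α • !![0,0,0; 0,0,1; 0,-1,0]

/-- An admissible pair for `(Σ)` on `[a,b]`: a measurable control `u : [a,b] → [-1,1]`
together with an absolutely continuous curve `γ : [a,b] → SO(3)` solving
`γ' = γ·(f + u·g)` a.e. (expressed in integral form, entrywise). -/
structure AdmissiblePair (α a b : ℝ) (γ : ℝ → Matrix (Fin 3) (Fin 3) ℝ) (u : ℝ → ℝ) : Prop where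
  hab : a ≤ b
  humeas : Measurable u
  hubound : ∀ t ∈ Set.Icc a b, |u t| ≤ 1
  hso3 : ∀ t ∈ Set.Icc a b, γ t * (γ t).transpose = 1 ∧ (γ t).det = 1
  hcont : ContinuousOn γ (Set.Icc a b)
  hode : ∀ t ∈ Set.Icc a b, ∀ i j,
    γ t i j = γ a i j + ∫ s in a..t, (γ s * (fM α + u s • gM α)) i j

/-- Time optimality for `(Σ)`. -/
def TimeOptimal (α a b : ℝ) (γ : ℝ → Matrix (Fin 3) (Fin 3) ℝ) (u : ℝ → ℝ) : Prop :=
  AdmissiblePair α a b γ u ∧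
  ∀ a' b' γ' u', AdmissiblePair α a' b' γ' u' →
    γ' a' = γ a → γ' b' = γ b → b - a ≤ b' - a'

/-- `t` is a switching time of the control `u : [a,b] → [-1,1]`: in no neighbourhood of `t`
is `u` a.e. equal to a constant `c ∈ {-1,1}`. -/
def IsSwitching (a b : ℝ) (u : ℝ → ℝ) (t : ℝ) : Prop :=
  t ∈ Set.Icc a b ∧ ∀ ε > 0, ¬ ∃ c : ℝ, (c = 1 ∨ c = -1) ∧
    ∀ᵐ s ∂(volume.restrict (Set.Ioo (t - ε) (t + ε) ∩ Set.Icc a b)), u s = c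


theorem abs_entry_le {M : Matrix (Fin 3) (Fin 3) ℝ} (h : M * M.transpose = 1) (i j : Fin 3) :
    |M i j| ≤ 1 := by
  have hU : M ∈ Matrix.unitaryGroup (Fin 3) ℝ := by
    rw [Matrix.mem_unitaryGroup_iff, Matrix.star_eq_conjTranspose,
      Matrix.conjTranspose_eq_transpose_of_trivial]
    exact h
  simpa using entry_norm_bound_of_unitary hU i j

theorem abs_fM_le (α : ℝ) (i j : Fin 3) : |fM α i j| ≤ 1 := by
  have := Real.abs_cos_le_one α
  fin_cases i <;> fin_cases j <;> simp [fM, this]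

theorem abs_gM_le (α : ℝ) (i j : Fin 3) : |gM α i j| ≤ 1 := by
  have := Real.abs_sin_le_one α
  fin_cases i <;> fin_cases j <;> simp [gM, this]

theorem abs_rhs_le (α : ℝ) {M : Matrix (Fin 3) (Fin 3) ℝ} {c w : ℝ} (hc : 0 ≤ c)
    (hM : ∀ i j, |M i j| ≤ c) (hw : |w| ≤ 1) (i j : Fin 3) :
    |(M * (fM α + w • gM α)) i j| ≤ 6 * c := by
  have key : ∀ k, |M i k * (fM α + w • gM α) k j| ≤ 2 * c := by
    intro k
    rw [abs_mul, mul_comm 2 c]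
    refine mul_le_mul (hM i k) ?_ (abs_nonneg _) hc
    rw [Matrix.add_apply, Matrix.smul_apply, smul_eq_mul]
    refine (abs_add_le _ _).trans ?_
    rw [abs_mul]
    have h1 := abs_fM_le α k j
    have h2 := abs_gM_le α k j
    have := mul_le_mul hw h2 (abs_nonneg _) zero_le_one
    linarith
  rw [Matrix.mul_apply]
  refine (Finset.abs_sum_le_sum_abs _ _).trans ?_
  refine (Finset.sum_le_sum (fun k _ => key k)).trans ?_
  simp
  linarith

theorem rhs_eq (α w : ℝ) (M : Matrix (Fin 3) (Fin 3) ℝ) (i j : Fin 3) :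
    (M * (fM α + w • gM α)) i j = (M * fM α) i j + w * (M * gM α) i j := by
  rw [Matrix.mul_add, Matrix.mul_smul, Matrix.add_apply, Matrix.smul_apply, smul_eq_mul]

namespace AdmissiblePair

variable {α a b : ℝ} {γ : ℝ → Matrix (Fin 3) (Fin 3) ℝ} {u : ℝ → ℝ}

theorem u_integrable (h : AdmissiblePair α a b γ u) {s t : ℝ} (hs : s ∈ Set.Icc a b)
    (ht : t ∈ Set.Icc a b) : IntervalIntegrable u volume s t := by
  have : IntegrableOn u (Set.Icc a b) := by
    refine Measure.integrableOn_of_bounded (M := 1) (by simp) h.humeas.aestronglyMeasurable ?_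
    filter_upwards [ae_restrict_mem measurableSet_Icc] with x hx
    exact h.hubound x hx
  refine (this.mono_set ?_).intervalIntegrable
  exact Set.uIcc_subset_Icc hs ht

theorem entry_cont (h : AdmissiblePair α a b γ u) (A : Matrix (Fin 3) (Fin 3) ℝ) (i j : Fin 3) :
    ContinuousOn (fun t => (γ t * A) i j) (Set.Icc a b) := by
  have h1 : Continuous (fun M : Matrix (Fin 3) (Fin 3) ℝ => (M * A) i j) := by fun_prop
  exact h1.comp_continuousOn h.hcont

theorem rhs_integrable (h : AdmissiblePair α a b γ u) {s t : ℝ} (hs : s ∈ Set.Icc a b)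
    (ht : t ∈ Set.Icc a b) (i j : Fin 3) :
    IntervalIntegrable (fun r => (γ r * (fM α + u r • gM α)) i j) volume s t := by
  simp only [rhs_eq]
  have hsub := Set.uIcc_subset_Icc hs ht
  exact ((h.entry_cont _ i j).mono hsub).intervalIntegrable.add
    ((h.u_integrable hs ht).mul_continuousOn ((h.entry_cont _ i j).mono hsub))

theorem incr (h : AdmissiblePair α a b γ u) {s t : ℝ} (hs : s ∈ Set.Icc a b)
    (ht : t ∈ Set.Icc a b) (i j : Fin 3) :
    γ t i j - γ s i j = ∫ r in s..t, (γ r * (fM α + u r • gM α)) i j := by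
  have ha : a ∈ Set.Icc a b := ⟨le_rfl, h.hab⟩
  rw [h.hode t ht, h.hode s hs,
    ← integral_interval_sub_left (h.rhs_integrable ha ht i j) (h.rhs_integrable ha hs i j)]
  ring

theorem lip (h : AdmissiblePair α a b γ u) {s t : ℝ} (hs : s ∈ Set.Icc a b)
    (ht : t ∈ Set.Icc a b) (i j : Fin 3) :
    |γ t i j - γ s i j| ≤ 6 * |t - s| := by
  rw [h.incr hs ht, ← Real.norm_eq_abs]
  refine intervalIntegral.norm_integral_le_of_norm_le_const (C := 6) fun r hr => ?_
  have hr' : r ∈ Set.Icc a b := Set.uIcc_subset_Icc hs ht (Set.uIoc_subset_uIcc hr)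
  have := abs_rhs_le α zero_le_one (fun i j => abs_entry_le (h.hso3 r hr').1 i j)
    (h.hubound r hr') i j
  simpa using this

theorem frozen (h : AdmissiblePair α a b γ u) {s t : ℝ} (hs : s ∈ Set.Icc a b)
    (ht : t ∈ Set.Icc a b) (i j : Fin 3) :
    |γ t i j - γ s i j - ((t - s) * (γ s * fM α) i j + (∫ r in s..t, u r) * (γ s * gM α) i j)|
      ≤ 36 * |t - s| ^ 2 := by
  have e : (t - s) * (γ s * fM α) i j + (∫ r in s..t, u r) * (γ s * gM α) i j
      = ∫ r in s..t, (γ s * (fM α + u r • gM α)) i j := by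
    simp only [rhs_eq]
    rw [intervalIntegral.integral_add (by simp) ((h.u_integrable hs ht).mul_const _)]
    simp
  have hfi : IntervalIntegrable (fun r => (γ s * (fM α + u r • gM α)) i j) volume s t := by
    simp only [rhs_eq]
    exact (by simp : IntervalIntegrable _ _ _ _).add ((h.u_integrable hs ht).mul_const _)
  rw [e, h.incr hs ht, ← intervalIntegral.integral_sub (h.rhs_integrable hs ht i j) hfi]
  have := intervalIntegral.norm_integral_le_of_norm_le_const (a := s) (b := t) (C := 36 * |t - s|)
    (f := fun r => (γ r * (fM α + u r • gM α)) i j - (γ s * (fM α + u r • gM α)) i j) ?_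
  · rw [Real.norm_eq_abs] at this
    refine this.trans (le_of_eq (by ring))
  intro r hr
  have hr1 := Set.uIoc_subset_uIcc hr
  have hr' : r ∈ Set.Icc a b := Set.uIcc_subset_Icc hs ht hr1
  rw [← Matrix.sub_apply, ← Matrix.sub_mul, Real.norm_eq_abs]
  have hrs : |r - s| ≤ |t - s| := Set.abs_sub_left_of_mem_uIcc hr1
  refine (abs_rhs_le α (c := 6 * |t - s|) (by positivity) (fun i j => ?_)
    (h.hubound r hr') i j).trans (le_of_eq (by ring))
  rw [Matrix.sub_apply]
  refine (h.lip hs hr' i j).trans (by linarith)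

theorem shift (h : AdmissiblePair α a b γ u) (d : ℝ) :
    AdmissiblePair α (a - d) (b - d) (fun t => γ (t + d)) (fun t => u (t + d)) := by
  have hm : ∀ t ∈ Set.Icc (a - d) (b - d), t + d ∈ Set.Icc a b := fun t ht =>
    ⟨by linarith [ht.1], by linarith [ht.2]⟩
  refine ⟨by linarith [h.hab], h.humeas.comp (measurable_id.add_const d),
    fun t ht => h.hubound _ (hm t ht), fun t ht => h.hso3 _ (hm t ht),
    h.hcont.comp (by fun_prop) hm, fun t ht i j => ?_⟩
  have := h.hode _ (hm t ht) i j
  rw [intervalIntegral.integral_comp_add_right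
    (fun s => (γ s * (fM α + u s • gM α)) i j) d]
  simpa using this

theorem congr_u (h : AdmissiblePair α a b γ u) {v : ℝ → ℝ} (hv : Measurable v)
    (huv : ∀ t ∈ Set.Icc a b, v t = u t) : AdmissiblePair α a b γ v := by
  refine ⟨h.hab, hv, fun t ht => by rw [huv t ht]; exact h.hubound t ht, h.hso3, h.hcont,
    fun t ht i j => ?_⟩
  rw [h.hode t ht i j]
  congr 1
  refine intervalIntegral.integral_congr fun s hs => ?_
  have hs' : s ∈ Set.Icc a b := Set.uIcc_subset_Icc ⟨le_rfl, h.hab⟩ ht hs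
  simp only [huv s hs']

theorem congr_γ (h : AdmissiblePair α a b γ u) {δ : ℝ → Matrix (Fin 3) (Fin 3) ℝ}
    (huv : ∀ t ∈ Set.Icc a b, δ t = γ t) : AdmissiblePair α a b δ u := by
  refine ⟨h.hab, h.humeas, h.hubound, fun t ht => by rw [huv t ht]; exact h.hso3 t ht,
    h.hcont.congr huv, fun t ht i j => ?_⟩
  rw [huv t ht, huv a ⟨le_rfl, h.hab⟩, h.hode t ht i j]
  congr 1
  refine intervalIntegral.integral_congr fun s hs => ?_
  have hs' : s ∈ Set.Icc a b := Set.uIcc_subset_Icc ⟨le_rfl, h.hab⟩ ht hs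
  simp only [huv s hs']

theorem concat {c : ℝ} {γ₂ : ℝ → Matrix (Fin 3) (Fin 3) ℝ} {u₂ : ℝ → ℝ}
    (h : AdmissiblePair α a b γ u) (h₂ : AdmissiblePair α b c γ₂ u₂) (hb : γ b = γ₂ b) :
    AdmissiblePair α a c (fun t => if t ≤ b then γ t else γ₂ t)
      (fun t => if t ≤ b then u t else u₂ t) := by
  have hab := h.hab
  have hbc := h₂.hab
  set δ : ℝ → Matrix (Fin 3) (Fin 3) ℝ := fun t => if t ≤ b then γ t else γ₂ t with hδ
  set w : ℝ → ℝ := fun t => if t ≤ b then u t else u₂ t with hw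
  have hwm : Measurable w := Measurable.ite measurableSet_Iic h.humeas h₂.humeas
  have d1 : ∀ t ∈ Set.Icc a b, δ t = γ t := fun t ht => by simp [hδ, ht.2]
  have w1 : ∀ t ∈ Set.Icc a b, w t = u t := fun t ht => by simp [hw, ht.2]
  have d2 : ∀ t ∈ Set.Icc b c, δ t = γ₂ t := fun t ht => by
    rcases eq_or_lt_of_le ht.1 with rfl | h'
    · simp [hδ, hb]
    · simp [hδ, not_le.2 h']
  have hA := (h.congr_u hwm w1).congr_γ d1
  have hB := h₂.congr_γ d2
  have hode2 : ∀ t ∈ Set.Icc b c, ∀ i j,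
      δ t i j = δ b i j + ∫ s in b..t, (δ s * (fM α + w s • gM α)) i j := by
    intro t ht i j
    rw [hB.hode t ht i j]
    congr 1
    refine intervalIntegral.integral_congr_ae (Filter.Eventually.of_forall fun s hs => ?_)
    rw [Set.uIoc_of_le ht.1] at hs
    simp [hw, not_le.2 hs.1]
  have hfi2 : ∀ t ∈ Set.Icc b c, ∀ i j, IntervalIntegrable
      (fun s => (δ s * (fM α + w s • gM α)) i j) volume b t := by
    intro t ht i j
    refine (hB.rhs_integrable ⟨le_rfl, hbc⟩ ht i j).congr fun s hs => ?_
    rw [Set.uIoc_of_le ht.1] at hs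
    simp [hw, not_le.2 hs.1]
  have cover : ∀ t ∈ Set.Icc a c, t ∈ Set.Icc a b ∨ t ∈ Set.Ioc b c := fun t ht => by
    rcases le_or_gt t b with h' | h'
    · exact Or.inl ⟨ht.1, h'⟩
    · exact Or.inr ⟨h', ht.2⟩
  refine ⟨hab.trans hbc, hwm, fun t ht => ?_, fun t ht => ?_, ?_, fun t ht i j => ?_⟩
  · rcases cover t ht with h' | h'
    · exact hA.hubound t h'
    · simp only [hw, not_le.2 h'.1, if_false]
      exact h₂.hubound t ⟨h'.1.le, h'.2⟩
  · rcases cover t ht with h' | h'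
    · exact hA.hso3 t h'
    · exact hB.hso3 t ⟨h'.1.le, h'.2⟩
  · rw [← Set.Icc_union_Icc_eq_Icc hab hbc]
    exact hA.hcont.union_of_isClosed hB.hcont isClosed_Icc isClosed_Icc
  · rcases cover t ht with h' | h'
    · exact hA.hode t h' i j
    · have ht2 : t ∈ Set.Icc b c := ⟨h'.1.le, h'.2⟩
      rw [hode2 t ht2, hA.hode b ⟨hab, le_rfl⟩, add_assoc, integral_add_adjacent_intervals
        (hA.rhs_integrable ⟨le_rfl, hab⟩ ⟨hab, le_rfl⟩ i j) (hfi2 t ht2 i j)]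

end AdmissiblePair

/-- Truncation to `[-1,1]`. -/
noncomputable def clampOne (x : ℝ) : ℝ := max (-1) (min 1 x)

theorem abs_clampOne_le (x : ℝ) : |clampOne x| ≤ 1 :=
  abs_le.2 ⟨le_max_left _ _, max_le (by norm_num) (min_le_left _ _)⟩

theorem clampOne_of_abs_le {x : ℝ} (h : |x| ≤ 1) : clampOne x = x := by
  rw [abs_le] at h
  rw [clampOne, min_eq_right h.2, max_eq_right h.1]

theorem measurable_clampOne : Measurable clampOne :=
  measurable_const.max (measurable_const.min measurable_id)

theorem exists_ultralimit (x : ℕ → ℝ) (C : ℝ) (h : ∀ n, |x n| ≤ C) :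
    ∃ y, Filter.Tendsto x (Filter.hyperfilter ℕ) (nhds y) := by
  obtain ⟨y, -, hy⟩ := (isCompact_Icc (a := -C) (b := C)).ultrafilter_le_nhds
    ((Filter.hyperfilter ℕ).map x) (by
      rw [Filter.le_principal_iff]
      exact Filter.mem_map.2 (Filter.Eventually.of_forall fun n => abs_le.1 (h n)))
  exact ⟨y, hy⟩

/-- Pointwise (ultra)limits of trajectories: the data needed to rebuild a trajectory. -/
theorem admissible_of_frozen (α T : ℝ) (hT : 0 ≤ T) (γ : ℝ → Matrix (Fin 3) (Fin 3) ℝ) (v : ℝ → ℝ)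
    (hso : ∀ t ∈ Set.Icc 0 T, γ t * (γ t).transpose = 1 ∧ (γ t).det = 1)
    (hlip : ∀ s ∈ Set.Icc 0 T, ∀ t ∈ Set.Icc 0 T, ∀ i j, |γ t i j - γ s i j| ≤ 6 * |t - s|)
    (hv : ∀ s t, |v t - v s| ≤ |t - s|)
    (hfr : ∀ s ∈ Set.Icc 0 T, ∀ t ∈ Set.Icc 0 T, ∀ i j,
      |γ t i j - γ s i j - ((t - s) * (γ s * fM α) i j + (v t - v s) * (γ s * gM α) i j)|
        ≤ 36 * |t - s| ^ 2) :
    AdmissiblePair α 0 T γ (fun t => clampOne (deriv v t)) := by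
  have hvL : LipschitzWith 1 v := LipschitzWith.of_dist_le_mul fun x y => by
    simpa [Real.dist_eq] using hv y x
  have hγL : ∀ i j, LipschitzOnWith 6 (fun t => γ t i j) (Set.Icc 0 T) := fun i j =>
    LipschitzOnWith.of_dist_le_mul fun x hx y hy => by
      simpa [Real.dist_eq] using hlip y hy x hx i j
  have hu : ∀ t, clampOne (deriv v t) = deriv v t := fun t =>
    clampOne_of_abs_le (by simpa using norm_deriv_le_of_lipschitz hvL (x₀ := t))
  simp only [hu]
  refine ⟨hT, measurable_deriv v, fun t _ => ?_, hso, ?_, fun t ht i j => ?_⟩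
  · simpa using norm_deriv_le_of_lipschitz hvL (x₀ := t)
  · exact continuousOn_pi.2 fun i => continuousOn_pi.2 fun j => (hγL i j).continuousOn
  have hac : AbsolutelyContinuousOnInterval (fun t => γ t i j) 0 t := by
    refine LipschitzOnWith.absolutelyContinuousOnInterval (K := 6) ((hγL i j).mono ?_)
    rw [Set.uIcc_of_le ht.1]
    exact Set.Icc_subset_Icc_right ht.2
  have h1 := hac.integral_deriv_eq_sub
  rw [← sub_eq_iff_eq_add', ← h1]
  refine intervalIntegral.integral_congr_ae ?_
  have hne : ∀ᵐ s : ℝ, s ≠ t := by simp [ae_iff]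
  filter_upwards [hvL.ae_differentiableAt_real, hne] with s hs hst hsI
  rw [Set.uIoc_of_le ht.1] at hsI
  have hs0 : s ∈ Set.Ioo 0 T := ⟨hsI.1, (lt_of_le_of_ne hsI.2 hst).trans_le ht.2⟩
  rw [rhs_eq]
  refine HasDerivAt.deriv ?_
  have hd : HasDerivAt (fun r => (r - s) * (γ s * fM α) i j + (v r - v s) * (γ s * gM α) i j)
      ((γ s * fM α) i j + deriv v s * (γ s * gM α) i j) s := by
    have a1 := ((hasDerivAt_id s).sub_const s).mul_const ((γ s * fM α) i j)
    have a2 := (hs.hasDerivAt.sub_const (v s)).mul_const ((γ s * gM α) i j)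
    simpa using a1.fun_add a2
  have he : HasDerivAt (fun r => γ r i j - γ s i j -
      ((r - s) * (γ s * fM α) i j + (v r - v s) * (γ s * gM α) i j)) 0 s := by
    rw [hasDerivAt_iff_isLittleO]
    have hO : (fun r => γ r i j - γ s i j -
      ((r - s) * (γ s * fM α) i j + (v r - v s) * (γ s * gM α) i j)) =O[nhds s]
        (fun r => (r - s) ^ 2) := by
      refine Asymptotics.IsBigO.of_bound 36 ?_
      filter_upwards [Icc_mem_nhds hs0.1 hs0.2] with r hr
      simpa using hfr s ⟨hs0.1.le, hs0.2.le⟩ r hr i j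
    have ho : (fun r : ℝ => (r - s) ^ 2) =o[nhds s] (fun r => r - s) :=
      by simpa using Asymptotics.isLittleO_pow_sub_sub s (m := 2) (by norm_num)
    simpa using hO.trans_isLittleO ho
  have := (he.fun_add hd).add_const (γ s i j)
  simpa using this

theorem exists_limit (α T : ℝ) (hT : 0 ≤ T) (p q : Matrix (Fin 3) (Fin 3) ℝ) (τ : ℕ → ℝ)
    (γ : ℕ → ℝ → Matrix (Fin 3) (Fin 3) ℝ) (u : ℕ → ℝ → ℝ)
    (h : ∀ n, AdmissiblePair α 0 (τ n) (γ n) (u n)) (h0 : ∀ n, γ n 0 = p)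
    (h1 : ∀ n, γ n (τ n) = q) (hτ : Filter.Tendsto τ Filter.atTop (nhds T)) (hle : ∀ n, T ≤ τ n) :
    ∃ δ w, AdmissiblePair α 0 T δ w ∧ δ 0 = p ∧ δ T = q := by
  have hsub : ∀ n, Set.Icc 0 T ⊆ Set.Icc 0 (τ n) := fun n => Set.Icc_subset_Icc_right (hle n)
  set w : ℕ → ℝ → ℝ := fun n t => clampOne (u n t) with hw
  have hwm : ∀ n, Measurable (w n) := fun n => measurable_clampOne.comp (h n).humeas
  have hA : ∀ n, AdmissiblePair α 0 (τ n) (γ n) (w n) := fun n =>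
    (h n).congr_u (hwm n) fun t ht => clampOne_of_abs_le ((h n).hubound t ht)
  have hwi : ∀ n a b, IntervalIntegrable (w n) volume a b := fun n a b => by
    have : IntegrableOn (w n) (Set.uIcc a b) :=
      Measure.integrableOn_of_bounded (M := 1) (by simp [Set.uIcc])
        (hwm n).aestronglyMeasurable (Filter.Eventually.of_forall fun t => abs_clampOne_le _)
    exact this.intervalIntegrable
  set v : ℕ → ℝ → ℝ := fun n t => ∫ r in (0 : ℝ)..t, w n r with hvdef
  have hvd : ∀ n s t, v n t - v n s = ∫ r in s..t, w n r := fun n s t =>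
    intervalIntegral.integral_interval_sub_left (hwi n _ _) (hwi n _ _)
  have hvl : ∀ n s t, |v n t - v n s| ≤ |t - s| := fun n s t => by
    rw [hvd]
    have := intervalIntegral.norm_integral_le_of_norm_le_const (a := s) (b := t) (C := 1)
      (f := w n) (fun x _ => abs_clampOne_le _)
    simpa using this
  have hvlim : ∀ t, ∃ y, Filter.Tendsto (fun n => v n t) (Filter.hyperfilter ℕ) (nhds y) :=
    fun t => exists_ultralimit _ |t| fun n => by
      have := hvl n 0 t
      simpa [hvdef] using this
  have hγlim : ∀ t i j, ∃ y, t ∈ Set.Icc 0 T →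
      Filter.Tendsto (fun n => γ n t i j) (Filter.hyperfilter ℕ) (nhds y) := fun t i j => by
    by_cases ht : t ∈ Set.Icc 0 T
    · obtain ⟨y, hy⟩ := exists_ultralimit (fun n => γ n t i j) 1
        fun n => abs_entry_le ((h n).hso3 t (hsub n ht)).1 i j
      exact ⟨y, fun _ => hy⟩
    · exact ⟨0, fun h => absurd h ht⟩
  choose V hV using hvlim
  choose D hD using hγlim
  set δ : ℝ → Matrix (Fin 3) (Fin 3) ℝ := fun t => Matrix.of (D t) with hδ
  have hδ1 : ∀ t ∈ Set.Icc 0 T, ∀ i j,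
    Filter.Tendsto (fun n => γ n t i j) (Filter.hyperfilter ℕ) (nhds (δ t i j)) :=
    fun t ht i j => hD t i j ht
  have hδ2 : ∀ t ∈ Set.Icc 0 T,
    Filter.Tendsto (fun n => γ n t) (Filter.hyperfilter ℕ) (nhds (δ t)) := fun t ht =>
    tendsto_pi_nhds.2 fun i => tendsto_pi_nhds.2 fun j => hδ1 t ht i j
  have hmul : ∀ t ∈ Set.Icc 0 T, ∀ A : Matrix (Fin 3) (Fin 3) ℝ, ∀ i j,
    Filter.Tendsto (fun n => (γ n t * A) i j) (Filter.hyperfilter ℕ) (nhds ((δ t * A) i j)) :=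
    fun t ht A i j => by
      have hc : Continuous (fun M : Matrix (Fin 3) (Fin 3) ℝ => (M * A) i j) := by fun_prop
      exact (hc.tendsto (δ t)).comp (hδ2 t ht)
  refine ⟨δ, _, admissible_of_frozen α T hT δ V ?_ ?_ ?_ ?_, ?_, ?_⟩
  · intro t ht
    constructor
    · have hc : Continuous (fun M : Matrix (Fin 3) (Fin 3) ℝ => M * M.transpose) := by fun_prop
      refine tendsto_nhds_unique ((hc.tendsto (δ t)).comp (hδ2 t ht)) ?_
      refine tendsto_const_nhds.congr fun n => ?_
      exact ((h n).hso3 t (hsub n ht)).1.symm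
    · have hc : Continuous (fun M : Matrix (Fin 3) (Fin 3) ℝ => M.det) := by fun_prop
      refine tendsto_nhds_unique ((hc.tendsto (δ t)).comp (hδ2 t ht)) ?_
      refine tendsto_const_nhds.congr fun n => ?_
      exact ((h n).hso3 t (hsub n ht)).2.symm
  · intro s hs t ht i j
    exact le_of_tendsto ((hδ1 t ht i j).sub (hδ1 s hs i j)).abs
      (Filter.Eventually.of_forall fun n => (h n).lip (hsub n hs) (hsub n ht) i j)
  · intro s t
    exact le_of_tendsto ((hV t).sub (hV s)).abs
      (Filter.Eventually.of_forall fun n => hvl n s t)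
  · intro s hs t ht i j
    refine le_of_tendsto (((hδ1 t ht i j).sub (hδ1 s hs i j)).sub
      (((hmul s hs (fM α) i j).const_mul (t - s)).add
        (((hV t).sub (hV s)).mul (hmul s hs (gM α) i j)))).abs
      (Filter.Eventually.of_forall fun n => ?_)
    rw [hvd]
    exact (hA n).frozen (hsub n hs) (hsub n ht) i j
  · refine tendsto_nhds_unique (hδ2 0 ⟨le_rfl, hT⟩) ?_
    simp only [h0]
    exact tendsto_const_nhds
  · ext i j
    refine tendsto_nhds_unique (hδ1 T ⟨hT, le_rfl⟩ i j) ?_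
    have hz : Filter.Tendsto (fun n => 6 * |T - τ n|) (Filter.hyperfilter ℕ) (nhds 0) := by
      have : Filter.Tendsto (fun n => 6 * |T - τ n|) Filter.atTop (nhds (6 * |T - T|)) :=
        ((tendsto_const_nhds.sub hτ).abs).const_mul 6
      simp only [sub_self, abs_zero, mul_zero] at this
      exact this.mono_left Nat.hyperfilter_le_atTop
    have hsq : Filter.Tendsto (fun n => γ n T i j - q i j) (Filter.hyperfilter ℕ) (nhds 0) := by
      refine squeeze_zero_norm (fun n => ?_) hz
      rw [← h1 n]
      exact (h n).lip ⟨hT.trans (hle n), le_rfl⟩ ⟨hT, hle n⟩ i j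
    simpa using hsq.add_const (q i j)

theorem exists_optimal_of_reach (α : ℝ) (p q : Matrix (Fin 3) (Fin 3) ℝ)
    (hr : ∃ T γ u, AdmissiblePair α 0 T γ u ∧ γ 0 = p ∧ γ T = q) :
    ∃ a b γ u, AdmissiblePair α a b γ u ∧ γ a = p ∧ γ b = q ∧
      ∀ a' b' γ' u', AdmissiblePair α a' b' γ' u' →
        γ' a' = p → γ' b' = q → b - a ≤ b' - a' := by
  set S : Set ℝ := {T | ∃ γ u, AdmissiblePair α 0 T γ u ∧ γ 0 = p ∧ γ T = q} with hS
  have hne : S.Nonempty := hr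
  have hbd : BddBelow S := ⟨0, fun T ⟨γ, u, h, _⟩ => h.hab⟩
  obtain ⟨τ, -, hτ, hmem⟩ := exists_seq_tendsto_sInf hne hbd
  choose γ u h using hmem
  obtain ⟨δ, w, hw, hp, hq⟩ := exists_limit α (sInf S)
    (le_csInf hne fun T ⟨γ, u, h, _⟩ => h.hab) p q τ γ u
    (fun n => (h n).1) (fun n => (h n).2.1) (fun n => (h n).2.2) hτ
    (fun n => csInf_le hbd ⟨γ n, u n, h n⟩)
  refine ⟨0, sInf S, δ, w, hw, hp, hq, fun a' b' γ' u' h' hp' hq' => ?_⟩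
  rw [sub_zero]
  refine csInf_le hbd ⟨fun t => γ' (t + a'), fun t => u' (t + a'), ?_, ?_, ?_⟩
  · simpa using h'.shift a'
  · simpa using hp'
  · simpa using hq'

/-- `q` can be reached from `p`. -/
def Reach (α : ℝ) (p q : Matrix (Fin 3) (Fin 3) ℝ) : Prop :=
  ∃ T γ u, AdmissiblePair α 0 T γ u ∧ γ 0 = p ∧ γ T = q

theorem Reach.trans {α : ℝ} {p q r : Matrix (Fin 3) (Fin 3) ℝ} (h₁ : Reach α p q)
    (h₂ : Reach α q r) : Reach α p r := by
  obtain ⟨T, γ, u, h, hp, hq⟩ := h₁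
  obtain ⟨S, δ, v, k, kq, kr⟩ := h₂
  have k' := k.shift (-T)
  simp only [sub_neg_eq_add, zero_add] at k'
  refine ⟨S + T, _, _, h.concat k' (by simp [hq, kq]), by simp [h.hab, hp], ?_⟩
  by_cases hS : S ≤ 0
  · have : S = 0 := le_antisymm hS k.hab
    subst this
    simp [hq, ← kr, kq]
  · simp [hS, kr]

/-- Membership in `SO(3)`. -/
def IsSO (p : Matrix (Fin 3) (Fin 3) ℝ) : Prop := p * p.transpose = 1 ∧ p.det = 1

theorem IsSO.mul {p q : Matrix (Fin 3) (Fin 3) ℝ} (hp : IsSO p) (hq : IsSO q) : IsSO (p * q) := by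
  refine ⟨?_, by rw [Matrix.det_mul, hp.2, hq.2, one_mul]⟩
  rw [Matrix.transpose_mul, Matrix.mul_assoc, ← Matrix.mul_assoc q, hq.1, Matrix.one_mul, hp.1]

theorem IsSO.transpose_mul {p : Matrix (Fin 3) (Fin 3) ℝ} (hp : IsSO p) :
    p.transpose * p = 1 := mul_eq_one_comm.1 hp.1

theorem IsSO.transpose {p : Matrix (Fin 3) (Fin 3) ℝ} (hp : IsSO p) : IsSO p.transpose :=
  ⟨by rw [Matrix.transpose_transpose]; exact hp.transpose_mul, by rw [Matrix.det_transpose, hp.2]⟩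

/-- A constant control trajectory. -/
theorem reach_const (α c : ℝ) (hc : |c| ≤ 1) (E : ℝ → Matrix (Fin 3) (Fin 3) ℝ)
    (hE0 : E 0 = 1) (hE : ∀ t, IsSO (E t))
    (hd : ∀ t i j, HasDerivAt (fun s => E s i j) ((E t * (fM α + c • gM α)) i j) t)
    {p : Matrix (Fin 3) (Fin 3) ℝ} (hp : IsSO p) {T : ℝ} (hT : 0 ≤ T) :
    Reach α p (p * E T) := by
  have hEc : Continuous E := continuous_pi fun i => continuous_pi fun j =>
    continuous_iff_continuousAt.2 fun t => (hd t i j).continuousAt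
  have hpc : Continuous (fun t => p * E t) := continuous_const.matrix_mul hEc
  refine ⟨T, fun t => p * E t, fun _ => c, ⟨hT, measurable_const, fun _ _ => hc,
    fun t _ => hp.mul (hE t), hpc.continuousOn, fun t ht i j => ?_⟩, by simp [hE0], rfl⟩
  have hder : ∀ s, HasDerivAt (fun s => (p * E s) i j) ((p * E s * (fM α + c • gM α)) i j) s := by
    intro s
    simp only [Matrix.mul_assoc, Matrix.mul_apply (M := p)]
    exact HasDerivAt.fun_sum fun k _ => (hd s k j).const_mul (p i k)
  rw [intervalIntegral.integral_eq_sub_of_hasDerivAt (fun s _ => hder s)]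
  · ring
  · refine Continuous.intervalIntegrable ?_ _ _
    have : Continuous (fun t => p * E t * (fM α + c • gM α)) := hpc.matrix_mul continuous_const
    exact (this.matrix_elem i j)

/-- Rotation about the third axis. -/
noncomputable def rotZ (θ : ℝ) : Matrix (Fin 3) (Fin 3) ℝ :=
  !![cos θ, sin θ, 0; -sin θ, cos θ, 0; 0, 0, 1]

theorem rotZ_so (θ : ℝ) : IsSO (rotZ θ) := by
  have h := Real.sin_sq_add_cos_sq θ
  constructor
  · ext i j
    fin_cases i <;> fin_cases j <;>
      simp [rotZ, Matrix.mul_apply, Fin.sum_univ_three] <;> grind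
  · simp [rotZ, Matrix.det_fin_three]
    linear_combination h

/-- Rotation about the axis `(sin α, 0, cos α)`. -/
noncomputable def rotN (α t : ℝ) : Matrix (Fin 3) (Fin 3) ℝ :=
  !![1 - (1 - cos t) * cos α ^ 2, sin t * cos α, (1 - cos t) * (cos α * sin α);
    -(sin t * cos α), cos t, sin t * sin α;
    (1 - cos t) * (cos α * sin α), -(sin t * sin α), 1 - (1 - cos t) * sin α ^ 2]

theorem rotN_so (α t : ℝ) : IsSO (rotN α t) := by
  have h := Real.sin_sq_add_cos_sq α
  have k := Real.sin_sq_add_cos_sq t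
  have h' : sin α ^ 2 = 1 - cos α ^ 2 := by linarith
  have k' : sin t ^ 2 = 1 - cos t ^ 2 := by linarith
  constructor
  · ext i j
    fin_cases i <;> fin_cases j <;>
      simp [rotN, Matrix.mul_apply, Fin.sum_univ_three] <;> ring_nf <;>
      grind
  · simp [rotN, Matrix.det_fin_three]
    ring_nf
    grind

theorem reach_rotZ {α : ℝ} (hα : α ∈ Set.Ioo 0 (π / 2)) (θ : ℝ)
    {p : Matrix (Fin 3) (Fin 3) ℝ} (hp : IsSO p) : Reach α p (p * rotZ θ) := by
  have hc : 0 < cos α := Real.cos_pos_of_mem_Ioo ⟨by linarith [hα.1, Real.pi_pos], hα.2⟩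
  obtain ⟨n, hn⟩ := exists_nat_ge (-θ / (2 * π))
  rw [div_le_iff₀ (by positivity)] at hn
  have h := reach_const α 0 (by simp) (fun t => rotZ (cos α * t)) (by
      ext i j
      fin_cases i <;> fin_cases j <;> simp [rotZ]) (fun t => rotZ_so _) (fun t i j => by
      have e : HasDerivAt (fun s => cos α * s) (cos α) t := by
        simpa using (hasDerivAt_id t).const_mul (cos α)
      have hs := e.sin
      have hcos := e.cos
      fin_cases i <;> fin_cases j <;>
        simp [rotZ, fM, Matrix.mul_apply, Fin.sum_univ_three]
      · refine HasDerivAt.congr_deriv (hcos) ?_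
        ring
      · exact hs
      · exact hasDerivAt_const _ _
      · exact hs.neg
      · refine HasDerivAt.congr_deriv (hcos) ?_
        ring
      · exact hasDerivAt_const _ _
      · exact hasDerivAt_const _ _
      · exact hasDerivAt_const _ _
      · exact hasDerivAt_const _ _) hp (T := (θ + n * (2 * π)) / cos α)
      (div_nonneg (by linarith) hc.le)
  have e : rotZ (cos α * ((θ + n * (2 * π)) / cos α)) = rotZ θ := by
    rw [mul_div_cancel₀ _ hc.ne']
    simp [rotZ, Real.cos_add_nat_mul_two_pi, Real.sin_add_nat_mul_two_pi]
  simpa only [e] using h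

theorem reach_rotN (α : ℝ) {t : ℝ} (ht : 0 ≤ t)
    {p : Matrix (Fin 3) (Fin 3) ℝ} (hp : IsSO p) : Reach α p (p * rotN α t) := by
  have h := Real.sin_sq_add_cos_sq α
  refine reach_const α 1 (by simp) (fun t => rotN α t) (by
      ext i j
      fin_cases i <;> fin_cases j <;> simp [rotN]) (fun t => rotN_so _ _) (fun t i j => ?_) hp ht
  have hs := Real.hasDerivAt_sin t
  have hcos := Real.hasDerivAt_cos t
  fin_cases i <;> fin_cases j <;>
    simp [rotN, fM, gM, Matrix.mul_apply, Fin.sum_univ_three]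
  · refine HasDerivAt.congr_deriv (((hcos.const_sub 1).mul_const (cos α ^ 2)).const_sub 1) ?_
    ring
  · refine HasDerivAt.congr_deriv (hs.mul_const (cos α)) ?_
    linear_combination (cos α - cos α * cos t) * h
  · refine HasDerivAt.congr_deriv ((hcos.const_sub 1).mul_const (cos α * sin α)) ?_
    ring
  · refine HasDerivAt.congr_deriv ((hs.mul_const (cos α)).neg) ?_
    ring
  · refine HasDerivAt.congr_deriv (hcos) ?_
    linear_combination (sin t) * h
  · refine HasDerivAt.congr_deriv (hs.mul_const (sin α)) ?_
    ring
  · refine HasDerivAt.congr_deriv ((hcos.const_sub 1).mul_const (cos α * sin α)) ?_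
    ring
  · refine HasDerivAt.congr_deriv ((hs.mul_const (sin α)).neg) ?_
    linear_combination (-sin α + sin α * cos t) * h
  · refine HasDerivAt.congr_deriv (((hcos.const_sub 1).mul_const (sin α ^ 2)).const_sub 1) ?_
    ring

theorem exists_angle {c s : ℝ} (h : c ^ 2 + s ^ 2 = 1) : ∃ θ, cos θ = c ∧ sin θ = s := by
  have hn : ‖(⟨c, s⟩ : ℂ)‖ = 1 := by
    rw [Complex.norm_def, Complex.normSq_mk, ← pow_two, ← pow_two, h, Real.sqrt_one]
  have hne : (⟨c, s⟩ : ℂ) ≠ 0 := by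
    intro h0
    simp [h0] at hn
  exact ⟨Complex.arg ⟨c, s⟩, by rw [Complex.cos_arg hne, hn, div_one],
    by rw [Complex.sin_arg, hn, div_one]⟩

theorem exists_rot {x y x' y' : ℝ} (h : x ^ 2 + y ^ 2 = x' ^ 2 + y' ^ 2) :
    ∃ θ, cos θ * x + sin θ * y = x' ∧ -sin θ * x + cos θ * y = y' := by
  by_cases h0 : x ^ 2 + y ^ 2 = 0
  · have hx : x = 0 := by nlinarith [sq_nonneg x, sq_nonneg y]
    have hy : y = 0 := by nlinarith [sq_nonneg x, sq_nonneg y]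
    have hx' : x' = 0 := by nlinarith [sq_nonneg x', sq_nonneg y']
    have hy' : y' = 0 := by nlinarith [sq_nonneg x', sq_nonneg y']
    exact ⟨0, by simp [hx, hx'], by simp [hy, hy']⟩
  · obtain ⟨θ, hc, hs⟩ := exists_angle (c := (x * x' + y * y') / (x ^ 2 + y ^ 2))
      (s := (x' * y - x * y') / (x ^ 2 + y ^ 2)) (by
        rw [div_pow, div_pow, ← add_div, div_eq_one_iff_eq (pow_ne_zero 2 h0)]
        linear_combination (-(x ^ 2 + y ^ 2)) * h)
    refine ⟨θ, ?_, ?_⟩ <;> rw [hc, hs] <;> field_simp <;> ring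

theorem col_norm {s : Matrix (Fin 3) (Fin 3) ℝ} (hs : IsSO s) :
    s 0 2 ^ 2 + s 1 2 ^ 2 = 1 - s 2 2 ^ 2 := by
  have := congrFun (congrFun hs.transpose_mul 2) 2
  simp [Matrix.mul_apply, Fin.sum_univ_three] at this
  linarith

/-- The set of matrices by which one can always move. -/
def Moves (α : ℝ) (s : Matrix (Fin 3) (Fin 3) ℝ) : Prop :=
  IsSO s ∧ ∀ p, IsSO p → Reach α p (p * s)

theorem Moves.mul {α : ℝ} {s t : Matrix (Fin 3) (Fin 3) ℝ} (hs : Moves α s) (ht : Moves α t) :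
    Moves α (s * t) :=
  ⟨hs.1.mul ht.1, fun p hp => (hs.2 p hp).trans (by
    rw [← Matrix.mul_assoc]
    exact ht.2 _ (hp.mul hs.1))⟩

theorem moves_rotZ {α : ℝ} (hα : α ∈ Set.Ioo 0 (π / 2)) (θ : ℝ) : Moves α (rotZ θ) :=
  ⟨rotZ_so θ, fun _ hp => reach_rotZ hα θ hp⟩

theorem moves_rotN (α : ℝ) {t : ℝ} (ht : 0 ≤ t) : Moves α (rotN α t) :=
  ⟨rotN_so α t, fun _ hp => reach_rotN α ht hp⟩

theorem exists_height {α : ℝ} (hα : α ∈ Set.Ioo 0 (π / 2)) (k : ℕ) :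
    ∀ θ, 0 ≤ θ → θ ≤ 2 * α * (k + 1) → ∃ s, Moves α s ∧ s 2 2 = cos θ := by
  have hsin : 0 < sin α := Real.sin_pos_of_pos_of_lt_pi hα.1 (by linarith [hα.2, Real.pi_pos])
  induction k with
  | zero =>
    intro θ h0 h1
    simp only [Nat.cast_zero, zero_add, mul_one] at h1
    have hcos : cos (2 * α) ≤ cos θ :=
      Real.cos_le_cos_of_nonneg_of_le_pi h0 (by linarith [hα.2]) h1
    have h2 : cos (2 * α) = 1 - 2 * sin α ^ 2 := by
      rw [Real.cos_two_mul]
      linarith [Real.sin_sq_add_cos_sq α]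
    have hs2 : 0 < sin α ^ 2 := by positivity
    refine ⟨_, moves_rotN α (Real.arccos_nonneg (1 - (1 - cos θ) / sin α ^ 2)), ?_⟩
    have hq : (1 - cos θ) / sin α ^ 2 ≤ 2 := by
      rw [div_le_iff₀ hs2]
      linarith
    have hq' : 0 ≤ (1 - cos θ) / sin α ^ 2 := div_nonneg (by linarith [Real.cos_le_one θ]) hs2.le
    simp only [rotN, Matrix.of_apply, Matrix.cons_val]
    rw [Real.cos_arccos (by linarith) (by linarith)]
    field_simp
    ring
  | succ k ih =>
    intro θ h0 h1
    by_cases hθ : θ ≤ 2 * α * (k + 1)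
    · exact ih θ h0 hθ
    push_cast at h1
    have hk : (0 : ℝ) ≤ k := k.cast_nonneg
    have hα0 := hα.1
    obtain ⟨s, hs, hs2⟩ := ih (θ - 2 * α) (by nlinarith) (by linarith)
    have hn := col_norm hs.1
    rw [hs2] at hn
    obtain ⟨ψ, h3, h4⟩ := exists_rot (x := s 0 2) (y := s 1 2) (x' := -sin (θ - 2 * α)) (y' := 0)
      (by linarith [Real.sin_sq_add_cos_sq (θ - 2 * α)])
    refine ⟨rotN α π * (rotZ ψ * s),
      (moves_rotN α Real.pi_pos.le).mul ((moves_rotZ hα ψ).mul hs), ?_⟩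
    have e : θ = (θ - 2 * α) + 2 * α := by ring
    conv_rhs => rw [e, Real.cos_add, Real.cos_two_mul, Real.sin_two_mul]
    simp only [rotN, rotZ, Matrix.mul_apply, Fin.sum_univ_three, Matrix.of_apply, Matrix.cons_val,
      Real.cos_pi, Real.sin_pi, hs2]
    have h := Real.sin_sq_add_cos_sq α
    linear_combination (2 * cos α * sin α) * h3 - 2 * cos (θ - 2 * α) * h

theorem eq_rotZ {s : Matrix (Fin 3) (Fin 3) ℝ} (hs : IsSO s) (h : s 2 2 = 1) :
    ∃ θ, s = rotZ θ := by
  have hc := col_norm hs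
  have hr := col_norm hs.transpose
  simp only [Matrix.transpose_apply, h] at hc hr
  have h02 : s 0 2 = 0 := by nlinarith [sq_nonneg (s 0 2), sq_nonneg (s 1 2)]
  have h12 : s 1 2 = 0 := by nlinarith [sq_nonneg (s 0 2), sq_nonneg (s 1 2)]
  have h20 : s 2 0 = 0 := by nlinarith [sq_nonneg (s 2 0), sq_nonneg (s 2 1)]
  have h21 : s 2 1 = 0 := by nlinarith [sq_nonneg (s 2 0), sq_nonneg (s 2 1)]
  have hdet := hs.2
  rw [Matrix.det_fin_three] at hdet
  simp only [h, h02, h12, h20, h21] at hdet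
  have e00 := congrFun (congrFun hs.1 0) 0
  have e11 := congrFun (congrFun hs.1 1) 1
  simp [Matrix.mul_apply, Fin.sum_univ_three, h02, h12] at e00 e11
  have hz : (s 0 0 - s 1 1) ^ 2 + (s 0 1 + s 1 0) ^ 2 = 0 := by
    linear_combination e00 + e11 - 2 * hdet
  have h1 : s 1 1 = s 0 0 := by
    nlinarith [sq_nonneg (s 0 0 - s 1 1), sq_nonneg (s 0 1 + s 1 0)]
  have h2 : s 1 0 = - s 0 1 := by
    nlinarith [sq_nonneg (s 0 0 - s 1 1), sq_nonneg (s 0 1 + s 1 0)]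
  obtain ⟨θ, hθ, hθ'⟩ := exists_angle (c := s 0 0) (s := s 0 1) (by linarith)
  refine ⟨θ, ?_⟩
  ext i j
  fin_cases i <;> fin_cases j <;> simp [rotZ, *]

theorem moves_all {α : ℝ} (hα : α ∈ Set.Ioo 0 (π / 2)) {g : Matrix (Fin 3) (Fin 3) ℝ}
    (hg : IsSO g) : Moves α g := by
  have hα0 := hα.1
  obtain ⟨k, hk⟩ := exists_nat_ge (arccos (g 2 2) / (2 * α))
  rw [div_le_iff₀ (by linarith)] at hk
  obtain ⟨s, hs, hs2⟩ := exists_height hα k (arccos (g 2 2)) (Real.arccos_nonneg _) (by nlinarith)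
  have hb := abs_le.1 (abs_entry_le hg.1 2 2)
  rw [Real.cos_arccos hb.1 hb.2] at hs2
  have n1 := col_norm hs.1
  have n2 := col_norm hg
  rw [hs2, ← n2] at n1
  obtain ⟨ψ, h3, h4⟩ := exists_rot n1
  set r := rotZ ψ * s with hr
  have hrM : Moves α r := (moves_rotZ hα ψ).mul hs
  have r0 : r 0 2 = g 0 2 := by
    simp only [hr, rotZ, Matrix.mul_apply, Fin.sum_univ_three, Matrix.of_apply, Matrix.cons_val]
    linarith
  have r1 : r 1 2 = g 1 2 := by
    simp only [hr, rotZ, Matrix.mul_apply, Fin.sum_univ_three, Matrix.of_apply, Matrix.cons_val]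
    linarith
  have r2 : r 2 2 = g 2 2 := by
    simp only [hr, rotZ, Matrix.mul_apply, Fin.sum_univ_three, Matrix.of_apply, Matrix.cons_val, hs2]
    ring
  obtain ⟨θ, hθ⟩ := eq_rotZ (hrM.1.transpose.mul hg) (by
    simp [Matrix.mul_apply, Fin.sum_univ_three, r0, r1, r2]
    linarith)
  have : g = r * rotZ θ := by
    rw [← hθ, ← Matrix.mul_assoc, hrM.1.1, Matrix.one_mul]
  rw [this]
  exact hrM.mul (moves_rotZ hα θ)

theorem reach_all {α : ℝ} (hα : α ∈ Set.Ioo 0 (π / 2)) {p q : Matrix (Fin 3) (Fin 3) ℝ}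
    (hp : IsSO p) (hq : IsSO q) : Reach α p q := by
  have := (moves_all hα (hp.transpose.mul hq)).2 p hp
  rwa [← Matrix.mul_assoc, hp.1, Matrix.one_mul] at this

/-- For every pair of points of `SO(3)` there exists a time optimal trajectory of `(Σ)`
joining them. -/
theorem exists_time_optimal (α : ℝ) (hα : α ∈ Set.Ioo 0 (π / 2))
    (p q : Matrix (Fin 3) (Fin 3) ℝ)
    (hp : p * p.transpose = 1 ∧ p.det = 1) (hq : q * q.transpose = 1 ∧ q.det = 1) :
    ∃ a b γ u, AdmissiblePair α a b γ u ∧ γ a = p ∧ γ b = q ∧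
      ∀ a' b' γ' u', AdmissiblePair α a' b' γ' u' →
        γ' a' = p → γ' b' = q → b - a ≤ b' - a' := by
  exact exists_optimal_of_reach α p q (reach_all hα hp hq)
end

section
/- Let (γ, u, λ₀, φ₁, φ₂, φ₃) be an extremal pair for (Σ) on [a,b], and suppose φ₂ vanishes identically on some nondegenerate subinterval [c,d] ⊆ [a,b] (c < d). Then λ₀ = 1 (the extremal is normal), φ₃ ≡ 0 and φ₁ ≡ −1 on [c,d], and u(t) = 0 for almost every t ∈ [c,d]. In particular, singular arcs of (Σ) are integral curves of the drift x·f. -/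
open Real MeasureTheory intervalIntegral Matrix

/-- An extremal pair for `(Σ)`: an admissible pair together with `λ₀ ∈ {0,1}` and
absolutely continuous switching functions `φ₁, φ₂, φ₃` (never simultaneously zero)
satisfying the adjoint equations, the constancy of the Hamiltonian and the
minimality condition. -/
structure ExtremalPair (α a b : ℝ) (γ : ℝ → Matrix (Fin 3) (Fin 3) ℝ) (u : ℝ → ℝ)
    (lam0 : ℝ) (φ₁ φ₂ φ₃ : ℝ → ℝ) : Prop where
  adm : AdmissiblePair α a b γ u
  hlam : lam0 = 0 ∨ lam0 = 1
  nontriv : ∀ t ∈ Set.Icc a b, ¬(φ₁ t = 0 ∧ φ₂ t = 0 ∧ φ₃ t = 0)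
  hφ₁cont : ContinuousOn φ₁ (Set.Icc a b)
  hφ₂cont : ContinuousOn φ₂ (Set.Icc a b)
  hφ₃cont : ContinuousOn φ₃ (Set.Icc a b)
  hode1 : ∀ t ∈ Set.Icc a b, φ₁ t = φ₁ a + ∫ s in a..t, (-(u s) * φ₃ s)
  hode2 : ∀ t ∈ Set.Icc a b, φ₂ t = φ₂ a + ∫ s in a..t, φ₃ s
  hode3 : ∀ t ∈ Set.Icc a b, φ₃ t = φ₃ a +
    ∫ s in a..t, (Real.sin α ^ 2 * u s * φ₁ s - Real.cos α ^ 2 * φ₂ s)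
  hham : ∀ᵐ t ∂(volume.restrict (Set.Icc a b)), φ₁ t + u t * φ₂ t + lam0 = 0
  hmin : ∀ᵐ t ∂(volume.restrict (Set.Icc a b)), u t * φ₂ t = -|φ₂ t|

theorem ae_zero_of_integral_const (a b c d k : ℝ) (h F : ℝ → ℝ)
    (hint : IntervalIntegrable h volume a b)
    (hF : ∀ t ∈ Set.Icc a b, F t = F a + ∫ s in a..t, h s)
    (hac : a ≤ c) (hcd : c < d) (hdb : d ≤ b) (hk : ∀ t ∈ Set.Icc c d, F t = k) :
    ∀ᵐ t ∂(volume.restrict (Set.Icc c d)), h t = 0 := by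
  have hab : a ≤ b := by linarith
  rw [← restrict_Ioo_eq_restrict_Icc, ae_restrict_iff' measurableSet_Ioo]
  filter_upwards [hint.ae_hasDerivAt_integral] with t ht htcd
  have h1 := ht (by rw [Set.uIcc_of_le hab]; exact ⟨by linarith [htcd.1], by linarith [htcd.2]⟩)
    a Set.left_mem_uIcc
  have h2 : HasDerivAt (fun x => ∫ s in a..x, h s) 0 t := by
    refine (hasDerivAt_const t (k - F a)).congr_of_eventuallyEq ?_
    filter_upwards [Ioo_mem_nhds htcd.1 htcd.2] with x hx
    have e1 := hF x ⟨by linarith [hx.1], by linarith [hx.2]⟩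
    have e2 := hk x ⟨hx.1.le, hx.2.le⟩
    linarith
  exact h1.unique h2

/-- On a singular arc (`φ₂ ≡ 0` on a nondegenerate subinterval) the extremal is normal,
`φ₃ ≡ 0`, `φ₁ ≡ −1` and the control vanishes a.e.: singular arcs are integral curves
of the drift. -/
theorem singular_arc (α a b c d lam0 : ℝ) (γ : ℝ → Matrix (Fin 3) (Fin 3) ℝ)
    (u φ₁ φ₂ φ₃ : ℝ → ℝ) (hα : α ∈ Set.Ioo 0 (π / 2))
    (hext : ExtremalPair α a b γ u lam0 φ₁ φ₂ φ₃)
    (hac : a ≤ c) (hcd : c < d) (hdb : d ≤ b)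
    (hsing : ∀ t ∈ Set.Icc c d, φ₂ t = 0) :
    lam0 = 1 ∧ (∀ t ∈ Set.Icc c d, φ₃ t = 0) ∧ (∀ t ∈ Set.Icc c d, φ₁ t = -1) ∧
    (∀ᵐ t ∂(volume.restrict (Set.Icc c d)), u t = 0) := by
  have hab : a ≤ b := by linarith
  have hsub : Set.Icc c d ⊆ Set.Icc a b := Set.Icc_subset_Icc hac hdb
  have hu : IntervalIntegrable u volume a b := by
    rw [intervalIntegrable_iff_integrableOn_Icc_of_le hab]
    refine Measure.integrableOn_of_bounded (M := 1) (by simp)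
      hext.adm.humeas.aestronglyMeasurable ?_
    rw [ae_restrict_iff' measurableSet_Icc]
    exact Filter.Eventually.of_forall fun t ht => hext.adm.hubound t ht
  have c1 : ContinuousOn φ₁ (Set.uIcc a b) := by
    rw [Set.uIcc_of_le hab]; exact hext.hφ₁cont
  have c2 : ContinuousOn φ₂ (Set.uIcc a b) := by
    rw [Set.uIcc_of_le hab]; exact hext.hφ₂cont
  have c3 : ContinuousOn φ₃ (Set.uIcc a b) := by
    rw [Set.uIcc_of_le hab]; exact hext.hφ₃cont
  have h3 : ∀ t ∈ Set.Icc c d, φ₃ t = 0 := by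
    have h := ae_zero_of_integral_const a b c d 0 φ₃ φ₂ c3.intervalIntegrable
      hext.hode2 hac hcd hdb hsing
    exact Measure.eqOn_Icc_of_ae_eq volume hcd.ne h (hext.hφ₃cont.mono hsub) continuousOn_const
  have h1 : ∀ t ∈ Set.Icc c d, φ₁ t = -lam0 := by
    have h : ∀ᵐ t ∂(volume.restrict (Set.Icc c d)), φ₁ t = -lam0 := by
      filter_upwards [ae_restrict_of_ae_restrict_of_subset hsub hext.hham,
        ae_restrict_mem measurableSet_Icc] with t ht htm
      rw [hsing t htm] at ht
      linarith
    exact Measure.eqOn_Icc_of_ae_eq volume hcd.ne h (hext.hφ₁cont.mono hsub) continuousOn_const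
  have hcm : c ∈ Set.Icc c d := ⟨le_rfl, hcd.le⟩
  have hl : lam0 = 1 := by
    rcases hext.hlam with h | h
    · exact absurd ⟨by rw [h1 c hcm, h, neg_zero], hsing c hcm, h3 c hcm⟩
        (hext.nontriv c (hsub hcm))
    · exact h
  subst hl
  refine ⟨rfl, h3, h1, ?_⟩
  have hi : IntervalIntegrable
      (fun s => Real.sin α ^ 2 * u s * φ₁ s - Real.cos α ^ 2 * φ₂ s) volume a b :=
    ((hu.const_mul _).mul_continuousOn c1).sub (c2.intervalIntegrable.const_mul _)
  have h := ae_zero_of_integral_const a b c d 0 _ φ₃ hi hext.hode3 hac hcd hdb h3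
  have hs : 0 < Real.sin α :=
    Real.sin_pos_of_pos_of_lt_pi hα.1 (by linarith [hα.2, Real.pi_pos])
  filter_upwards [h, ae_restrict_mem measurableSet_Icc] with t ht htm
  rw [hsing t htm, h1 t htm] at ht
  have : Real.sin α ^ 2 * u t = 0 := by linarith
  exact (mul_eq_zero.mp this).resolve_left (by positivity)
end

section
/- Let γ be a time optimal trajectory of (Σ) on [a,b]. If the associated control satisfies u = ε almost everywhere on [a,b] for a constant ε ∈ {−1, 1} (a bang arc), then b − a < 2π. If u = 0 almost everywhere on [a,b] (a singular arc), then b − a < 2π/cos α. -/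
open Real MeasureTheory intervalIntegral Matrix

/-- A solution of `γ' = γ X` with `X ^ 3 = - w ^ 2 X` is periodic of period `2π / w`. -/
theorem periodic_core (γ : ℝ → Matrix (Fin 3) (Fin 3) ℝ) (X : Matrix (Fin 3) (Fin 3) ℝ)
    (a b w : ℝ) (hw : 0 < w) (hX : X * X * X = -(w ^ 2) • X) (hab : a ≤ b)
    (hcont : ContinuousOn γ (Set.Icc a b))
    (hode : ∀ t ∈ Set.Icc a b, ∀ i j, γ t i j = γ a i j + ∫ s in a..t, (γ s * X) i j)
    (hb : a + 2 * π / w ≤ b) : γ (a + 2 * π / w) = γ a := by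
  have hT : 0 < 2 * π / w := by positivity
  set e : ℝ → Matrix (Fin 3) (Fin 3) ℝ := Set.IccExtend hab ((Set.Icc a b).domRestrict γ) with he
  have hec : Continuous e := (hcont.domRestrict).Icc_extend'
  have heq : ∀ t ∈ Set.Icc a b, e t = γ t := by
    intro t ht
    rw [he, Set.IccExtend_of_mem _ _ ht]
    rfl
  have hGc : ∀ i j, Continuous (fun s => (e s * X) i j) := fun i j =>
    (hec.matrix_mul continuous_const).matrix_elem i j
  set y : Fin 3 → Fin 3 → ℝ → ℝ := fun i j t => γ a i j + ∫ s in a..t, (e s * X) i j with hy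
  have hyd : ∀ i j t, HasDerivAt (y i j) ((e t * X) i j) t := by
    intro i j t
    exact ((hGc i j).integral_hasStrictDerivAt a t).hasDerivAt.const_add _
  have hyg : ∀ t ∈ Set.Icc a b, ∀ i j, y i j t = γ t i j := by
    intro t ht i j
    rw [hode t ht i j]
    simp only [hy]
    congr 1
    apply intervalIntegral.integral_congr
    intro s hs
    rw [Set.uIcc_of_le ht.1] at hs
    simp only
    rw [heq s ⟨hs.1, hs.2.trans ht.2⟩]
  set P : ℝ → Matrix (Fin 3) (Fin 3) ℝ := fun t =>
    1 + (-(Real.sin (w * (t - a)) / w)) • X + ((1 - Real.cos (w * (t - a))) / w ^ 2) • (X * X)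
    with hP
  set P' : ℝ → Matrix (Fin 3) (Fin 3) ℝ := fun t =>
    (-(Real.cos (w * (t - a)))) • X + (Real.sin (w * (t - a)) / w) • (X * X) with hP'
  have hPd : ∀ k j t, HasDerivAt (fun t => P t k j) (P' t k j) t := by
    intro k j t
    have h0 : HasDerivAt (fun t => w * (t - a)) w t := by
      simpa using ((hasDerivAt_id t).sub_const a).const_mul w
    have h1 := ((h0.sin.div_const w).neg.mul_const (X k j)).const_add
      ((1 : Matrix (Fin 3) (Fin 3) ℝ) k j)
    have h2 := ((h0.cos.const_sub 1).div_const (w ^ 2)).mul_const ((X * X) k j)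
    have h3 := h1.add h2
    refine (h3.congr_deriv ?_).congr_of_eventuallyEq ?_
    · simp only [hP', Matrix.add_apply, Matrix.smul_apply, smul_eq_mul]
      field_simp
    · refine Filter.Eventually.of_forall fun s => ?_
      simp only [hP, Matrix.add_apply, Matrix.smul_apply, smul_eq_mul, Pi.add_apply]
      rfl
  have hXP : ∀ t, X * P t + P' t = 0 := by
    intro t
    simp only [hP, hP', mul_add, mul_one, Matrix.mul_smul]
    rw [← mul_assoc, hX, smul_smul]
    ext i j
    simp only [Matrix.add_apply, Matrix.smul_apply, smul_eq_mul, Matrix.zero_apply]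
    field_simp
    ring
  have hconst : ∀ i j, ∀ t ∈ Set.Icc a b,
      (∑ k, y i k t * P t k j) = ∑ k, y i k a * P a k j := by
    intro i j
    have hd : ∀ t, HasDerivAt (fun t => ∑ k, y i k t * P t k j)
        (∑ k, ((e t * X) i k * P t k j + y i k t * P' t k j)) t := fun t =>
      HasDerivAt.fun_sum fun k _ => (hyd i k t).mul (hPd k j t)
    apply constant_of_has_deriv_right_zero
    · exact fun t _ => (hd t).continuousAt.continuousWithinAt
    · intro t ht
      have ht' : t ∈ Set.Icc a b := ⟨ht.1, ht.2.le⟩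
      refine ((hd t).congr_deriv ?_).hasDerivWithinAt
      have h4 : (γ t * (X * P t + P' t)) i j = 0 := by rw [hXP]; simp
      rw [mul_add, ← mul_assoc, Matrix.add_apply, Matrix.mul_apply,
        Matrix.mul_apply (M := γ t), ← Finset.sum_add_distrib] at h4
      rw [← h4]
      refine Finset.sum_congr rfl fun k _ => ?_
      rw [heq t ht', hyg t ht']
  have hTm : a + 2 * π / w ∈ Set.Icc a b := ⟨by linarith, hb⟩
  have ha : a ∈ Set.Icc a b := ⟨le_rfl, hab⟩
  have hPa : P a = 1 := by simp [hP]
  have hPT : P (a + 2 * π / w) = 1 := by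
    have : w * (a + 2 * π / w - a) = 2 * π := by field_simp; ring
    simp only [hP, this]
    simp
  ext i j
  have := hconst i j _ hTm
  simp only [hyg _ hTm, hyg _ ha, ← Matrix.mul_apply, hPa, hPT, mul_one] at this
  exact this

/-- An optimal trajectory whose control is a.e. the constant `c` is shorter than the period. -/
theorem arc_core (α a b : ℝ) (γ : ℝ → Matrix (Fin 3) (Fin 3) ℝ) (u : ℝ → ℝ)
    (hopt : TimeOptimal α a b γ u) (c w : ℝ) (hw : 0 < w)
    (hX : (fM α + c • gM α) * (fM α + c • gM α) * (fM α + c • gM α)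
      = -(w ^ 2) • (fM α + c • gM α))
    (hu : ∀ᵐ t ∂(volume.restrict (Set.Icc a b)), u t = c) : b - a < 2 * π / w := by
  obtain ⟨hadm, hmin⟩ := hopt
  by_contra hcon
  push Not at hcon
  have hT : 0 < 2 * π / w := by positivity
  set X := fM α + c • gM α with hXdef
  have hu' : ∀ᵐ t, t ∈ Set.Icc a b → u t = c := (ae_restrict_iff' measurableSet_Icc).1 hu
  have hint : ∀ s ∈ Set.Icc a b, ∀ t ∈ Set.Icc a b, ∀ i j,
      (∫ r in s..t, (γ r * (fM α + u r • gM α)) i j) = ∫ r in s..t, (γ r * X) i j := by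
    intro s hs t ht i j
    apply intervalIntegral.integral_congr_ae
    filter_upwards [hu'] with r hr hrm
    have : r ∈ Set.Icc a b := (Set.uIcc_subset_Icc hs ht) (Set.uIoc_subset_uIcc hrm)
    rw [hr this]
  have ha : a ∈ Set.Icc a b := ⟨le_rfl, hadm.hab⟩
  have hode : ∀ t ∈ Set.Icc a b, ∀ i j, γ t i j = γ a i j + ∫ s in a..t, (γ s * X) i j := by
    intro t ht i j
    rw [hadm.hode t ht i j, hint a ha t ht]
  have hper := periodic_core γ X a b w hw hX hadm.hab hadm.hcont hode (by linarith)
  have hTm : a + 2 * π / w ∈ Set.Icc a b := ⟨by linarith, by linarith⟩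
  have hsub : Set.Icc (a + 2 * π / w) b ⊆ Set.Icc a b := Set.Icc_subset_Icc_left hTm.1
  have hi : ∀ s ∈ Set.Icc a b, ∀ t ∈ Set.Icc a b, ∀ i j,
      IntervalIntegrable (fun r => (γ r * X) i j) volume s t := by
    intro s hs t ht i j
    apply ContinuousOn.intervalIntegrable
    have h1 : ContinuousOn (fun r => γ r * X) (Set.Icc a b) :=
      (continuous_id.matrix_mul continuous_const).comp_continuousOn hadm.hcont
    exact ((continuous_id.matrix_elem i j).comp_continuousOn h1).mono (Set.uIcc_subset_Icc hs ht)
  have hnew : AdmissiblePair α (a + 2 * π / w) b γ u :=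
    { hab := hTm.2
      humeas := hadm.humeas
      hubound := fun t ht => hadm.hubound t (hsub ht)
      hso3 := fun t ht => hadm.hso3 t (hsub ht)
      hcont := hadm.hcont.mono hsub
      hode := by
        intro t ht i j
        rw [hint _ hTm t (hsub ht), hode t (hsub ht) i j, hode _ hTm i j, add_assoc,
          intervalIntegral.integral_add_adjacent_intervals (hi _ ha _ hTm i j)
            (hi _ hTm _ (hsub ht) i j)] }
  have := hmin _ _ _ _ hnew hper rfl
  linarith

theorem cube_core (α c : ℝ) :
    (fM α + c • gM α) * (fM α + c • gM α) * (fM α + c • gM α)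
      = -(Real.cos α ^ 2 + c ^ 2 * Real.sin α ^ 2) • (fM α + c • gM α) := by
  ext i j
  fin_cases i <;> fin_cases j <;> simp [fM, gM, Matrix.mul_apply, Fin.sum_univ_three] <;>
    first | ring1 | (left; ring1)

/-- A bang arc of a time optimal trajectory lasts less than `2π`; a singular arc lasts
less than `2π / cos α`. -/
theorem bang_singular_duration (α a b : ℝ) (γ : ℝ → Matrix (Fin 3) (Fin 3) ℝ) (u : ℝ → ℝ)
    (hα : α ∈ Set.Ioo 0 (π / 2)) (hopt : TimeOptimal α a b γ u) :
    (∀ ε : ℝ, (ε = 1 ∨ ε = -1) →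
      (∀ᵐ t ∂(volume.restrict (Set.Icc a b)), u t = ε) → b - a < 2 * π) ∧
    ((∀ᵐ t ∂(volume.restrict (Set.Icc a b)), u t = 0) → b - a < 2 * π / Real.cos α) := by
  have hc : 0 < Real.cos α := Real.cos_pos_of_mem_Ioo ⟨by linarith [hα.1, Real.pi_pos], hα.2⟩
  refine ⟨fun ε hε hu => ?_, fun hu => ?_⟩
  · have h := arc_core α a b γ u hopt ε 1 one_pos ?_ hu
    · simpa using h
    · rw [cube_core]
      have h2 : ε ^ 2 = 1 := by rcases hε with h | h <;> rw [h] <;> norm_num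
      rw [h2, one_mul, Real.cos_sq_add_sin_sq, one_pow]
  · refine arc_core α a b γ u hopt 0 (Real.cos α) hc ?_ hu
    rw [cube_core]
    simp
end
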